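/- Let 𝒜 be a weakly idempotent complete exact category and (𝒳,𝒴) a hereditary complete cotorsion pair in 𝒜 with ω = 𝒳∩𝒴 contravariantly finite in 𝒜. Let α : A→B and β : B→C be morphisms in 𝒜. If two of the three morphisms α, β, βα belong to Weq_ω, then so does the third. -/

import Mathlib

open CategoryTheory Limits ZeroObject

universe v u

/-- An exact structure (Quillen exact category) on an additive category `𝒜`:
a class of conflations (kernel-cokernel pairs), closed under isomorphisms,
with identities deflations, deflations closed under composition and stable
under pullback, and inflations stable under pushout. -/
structure ExactStructure (𝒜 : Type u) [Category.{v} 𝒜] [Preadditive 𝒜]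
    [HasZeroObject 𝒜] [HasBinaryBiproducts 𝒜] : Type (max u v) where
  conflation : ∀ ⦃X Y Z : 𝒜⦄, (X ⟶ Y) → (Y ⟶ Z) → Prop
  comp_zero : ∀ {X Y Z : 𝒜} {i : X ⟶ Y} {d : Y ⟶ Z}, conflation i d → i ≫ d = 0
  isKernel : ∀ {X Y Z : 𝒜} {i : X ⟶ Y} {d : Y ⟶ Z} (h : conflation i d),
    Nonempty (IsLimit (KernelFork.ofι i (comp_zero h)))
  isCokernel : ∀ {X Y Z : 𝒜} {i : X ⟶ Y} {d : Y ⟶ Z} (h : conflation i d),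
    Nonempty (IsColimit (CokernelCofork.ofπ d (comp_zero h)))
  conflation_iso : ∀ {X Y Z X' Y' Z' : 𝒜} {i : X ⟶ Y} {d : Y ⟶ Z}
    (eX : X ≅ X') (eY : Y ≅ Y') (eZ : Z ≅ Z') {i' : X' ⟶ Y'} {d' : Y' ⟶ Z'},
    conflation i d → i ≫ eY.hom = eX.hom ≫ i' → d ≫ eZ.hom = eY.hom ≫ d' →
    conflation i' d'
  id_deflation : ∀ X : 𝒜, conflation (0 : (0 : 𝒜) ⟶ X) (𝟙 X)
  deflation_comp : ∀ {X Y Z X' W : 𝒜} {i : X ⟶ Y} {d : Y ⟶ Z} {i' : X' ⟶ Z} {d' : Z ⟶ W},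
    conflation i d → conflation i' d' → ∃ (K : 𝒜) (k : K ⟶ Y), conflation k (d ≫ d')
  pullback_deflation : ∀ {X Y Z Z' : 𝒜} {i : X ⟶ Y} {d : Y ⟶ Z},
    conflation i d → ∀ (f : Z' ⟶ Z),
    ∃ (Y' : 𝒜) (f' : Y' ⟶ Y) (d' : Y' ⟶ Z') (K : 𝒜) (k : K ⟶ Y'),
      IsPullback f' d' d f ∧ conflation k d'
  pushout_inflation : ∀ {X Y Z X' : 𝒜} {i : X ⟶ Y} {d : Y ⟶ Z},
    conflation i d → ∀ (f : X ⟶ X'),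
    ∃ (Y' : 𝒜) (f' : Y ⟶ Y') (i' : X' ⟶ Y') (Q : 𝒜) (q : Y' ⟶ Q),
      IsPushout i f f' i' ∧ conflation i' q

variable {𝒜 : Type u} [Category.{v} 𝒜] [Preadditive 𝒜] [HasZeroObject 𝒜]
  [HasBinaryBiproducts 𝒜]

/-- `f` is an inflation: the first map of some conflation. -/
def IsInflation (E : ExactStructure 𝒜) {X Y : 𝒜} (i : X ⟶ Y) : Prop :=
  ∃ (Z : 𝒜) (d : Y ⟶ Z), E.conflation i d

/-- `f` is a deflation: the second map of some conflation. -/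
def IsDeflation (E : ExactStructure 𝒜) {Y Z : 𝒜} (d : Y ⟶ Z) : Prop :=
  ∃ (X : 𝒜) (i : X ⟶ Y), E.conflation i d

/-- `𝒜` is weakly idempotent complete: every split epimorphism is a deflation. -/
def IsWIC (E : ExactStructure 𝒜) : Prop :=
  ∀ {X Y : 𝒜} (d : X ⟶ Y) (s : Y ⟶ X), s ≫ d = 𝟙 Y → IsDeflation E d

/-- `Ext¹(A,B) = 0`: every conflation `B ⟶ M ⟶ A` splits. -/
def Ext1IsZero (E : ExactStructure 𝒜) (A B : 𝒜) : Prop :=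
  ∀ {M : 𝒜} (i : B ⟶ M) (d : M ⟶ A), E.conflation i d → ∃ r : M ⟶ B, i ≫ r = 𝟙 B

/-- `(X, Y)` is a cotorsion pair: each class is the `Ext¹`-orthogonal of the other. -/
def IsCotorsionPair (E : ExactStructure 𝒜) (X Y : Set 𝒜) : Prop :=
  (∀ A : 𝒜, A ∈ X ↔ ∀ B ∈ Y, Ext1IsZero E A B) ∧
  (∀ B : 𝒜, B ∈ Y ↔ ∀ A ∈ X, Ext1IsZero E A B)

/-- Completeness of a cotorsion pair: every object has approximation sequences. -/
def IsCompleteCP (E : ExactStructure 𝒜) (X Y : Set 𝒜) : Prop :=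
  ∀ A : 𝒜,
    (∃ (Y₀ X₀ : 𝒜) (i : Y₀ ⟶ X₀) (d : X₀ ⟶ A), E.conflation i d ∧ X₀ ∈ X ∧ Y₀ ∈ Y) ∧
    (∃ (Y₁ X₁ : 𝒜) (i : A ⟶ Y₁) (d : Y₁ ⟶ X₁), E.conflation i d ∧ X₁ ∈ X ∧ Y₁ ∈ Y)

/-- Heredity of a cotorsion pair: `X` is closed under kernels of deflations and
`Y` is closed under cokernels of inflations. -/
def IsHereditaryCP (E : ExactStructure 𝒜) (X Y : Set 𝒜) : Prop :=
  (∀ {K A B : 𝒜} (i : K ⟶ A) (d : A ⟶ B), E.conflation i d → A ∈ X → B ∈ X → K ∈ X) ∧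
  (∀ {K A B : 𝒜} (i : K ⟶ A) (d : A ⟶ B), E.conflation i d → K ∈ Y → A ∈ Y → B ∈ Y)

/-- `t : W ⟶ B` is a right `ω`-approximation of `B`. -/
def IsRightApprox (ω : Set 𝒜) {W B : 𝒜} (t : W ⟶ B) : Prop :=
  W ∈ ω ∧ ∀ (W' : 𝒜), W' ∈ ω → ∀ g : W' ⟶ B, ∃ h : W' ⟶ W, h ≫ t = g

/-- `ω` is contravariantly finite: every object has a right `ω`-approximation. -/
def IsContravariantlyFinite (ω : Set 𝒜) : Prop :=
  ∀ B : 𝒜, ∃ (W : 𝒜) (t : W ⟶ B), IsRightApprox ω t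

/-- A full additive subcategory closed under isomorphisms and direct summands,
viewed as a class of objects. -/
def AdditivelyClosed (S : Set 𝒜) : Prop :=
  (0 : 𝒜) ∈ S ∧ (∀ A B : 𝒜, A ∈ S → B ∈ S → (A ⊞ B) ∈ S) ∧
  (∀ {A B : 𝒜}, (A ≅ B) → A ∈ S → B ∈ S) ∧
  (∀ {A B : 𝒜} (i : A ⟶ B) (r : B ⟶ A), i ≫ r = 𝟙 A → B ∈ S → A ∈ S)

/-- `CoFib_ω`: inflations with cokernel in `X`. -/
def CoFibO (E : ExactStructure 𝒜) (X : Set 𝒜) : MorphismProperty 𝒜 :=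
  fun _ B f => ∃ (Z : 𝒜) (d : B ⟶ Z), E.conflation f d ∧ Z ∈ X

/-- `Fib_ω`: the `ω`-epic morphisms. -/
def FibO (ω : Set 𝒜) : MorphismProperty 𝒜 :=
  fun A B f => ∀ (W : 𝒜), W ∈ ω → ∀ g : W ⟶ B, ∃ h : W ⟶ A, h ≫ f = g

/-- `Weq_ω`: morphisms `f : A ⟶ B` such that for some `W ∈ ω` and `t : W ⟶ B`,
`(f,t) : A ⊞ W ⟶ B` is a deflation with kernel in `Y`. -/
def WeqO (E : ExactStructure 𝒜) (ω Y : Set 𝒜) : MorphismProperty 𝒜 :=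
  fun A B f => ∃ (W : 𝒜) (_ : W ∈ ω) (t : W ⟶ B) (K : 𝒜) (k : K ⟶ A ⊞ W),
    E.conflation k (biprod.desc f t) ∧ K ∈ Y

/-- `TCoFib_ω`: split monomorphisms with cokernel in `ω`. -/
def TCoFibO (E : ExactStructure 𝒜) (ω : Set 𝒜) : MorphismProperty 𝒜 :=
  fun A B f => (∃ r : B ⟶ A, f ≫ r = 𝟙 A) ∧
    ∃ (Z : 𝒜) (d : B ⟶ Z), E.conflation f d ∧ Z ∈ ω

/-- `TFib_ω`: deflations with kernel in `Y`. -/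
def TFibO (E : ExactStructure 𝒜) (Y : Set 𝒜) : MorphismProperty 𝒜 :=
  fun A _ f => ∃ (K : 𝒜) (k : K ⟶ A), E.conflation k f ∧ K ∈ Y

/-- `g` is a retract of `f`. -/
def IsRetractMor {A' B' A B : 𝒜} (g : A' ⟶ B') (f : A ⟶ B) : Prop :=
  ∃ (φ₁ : A' ⟶ A) (ψ₁ : A ⟶ A') (φ₂ : B' ⟶ B) (ψ₂ : B ⟶ B'),
    φ₁ ≫ ψ₁ = 𝟙 A' ∧ φ₂ ≫ ψ₂ = 𝟙 B' ∧ φ₁ ≫ f = g ≫ φ₂ ∧ f ≫ ψ₂ = ψ₁ ≫ g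

/-- A (closed, Quillen) model structure, given by classes of cofibrations,
fibrations and weak equivalences. -/
structure IsModelStructure (C F W : MorphismProperty 𝒜) : Prop where
  weq_comp : ∀ {X Y Z : 𝒜} (f : X ⟶ Y) (g : Y ⟶ Z), W f → W g → W (f ≫ g)
  weq_cancel_left : ∀ {X Y Z : 𝒜} (f : X ⟶ Y) (g : Y ⟶ Z), W f → W (f ≫ g) → W g
  weq_cancel_right : ∀ {X Y Z : 𝒜} (f : X ⟶ Y) (g : Y ⟶ Z), W g → W (f ≫ g) → W f
  retract_cofib : ∀ {A' B' A B : 𝒜} (g : A' ⟶ B') (f : A ⟶ B),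
    IsRetractMor g f → C f → C g
  retract_fib : ∀ {A' B' A B : 𝒜} (g : A' ⟶ B') (f : A ⟶ B),
    IsRetractMor g f → F f → F g
  retract_weq : ∀ {A' B' A B : 𝒜} (g : A' ⟶ B') (f : A ⟶ B),
    IsRetractMor g f → W f → W g
  lifting_left : ∀ {A B X Y : 𝒜} (i : A ⟶ B) (p : X ⟶ Y) (a : A ⟶ X) (b : B ⟶ Y),
    C i → W i → F p → a ≫ p = i ≫ b → ∃ s : B ⟶ X, i ≫ s = a ∧ s ≫ p = b
  lifting_right : ∀ {A B X Y : 𝒜} (i : A ⟶ B) (p : X ⟶ Y) (a : A ⟶ X) (b : B ⟶ Y),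
    C i → F p → W p → a ≫ p = i ≫ b → ∃ s : B ⟶ X, i ≫ s = a ∧ s ≫ p = b
  fact_left : ∀ {A B : 𝒜} (f : A ⟶ B), ∃ (Z : 𝒜) (i : A ⟶ Z) (p : Z ⟶ B),
    i ≫ p = f ∧ C i ∧ W i ∧ F p
  fact_right : ∀ {A B : 𝒜} (f : A ⟶ B), ∃ (Z : 𝒜) (j : A ⟶ Z) (q : Z ⟶ B),
    j ≫ q = f ∧ C j ∧ F q ∧ W q

/-- An object is cofibrant if `0 ⟶ X` is a cofibration. -/
def Cofibrant (C : MorphismProperty 𝒜) (A : 𝒜) : Prop := C (0 : (0 : 𝒜) ⟶ A)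

/-- An object is fibrant if `X ⟶ 0` is a fibration. -/
def Fibrant (F : MorphismProperty 𝒜) (A : 𝒜) : Prop := F (0 : A ⟶ (0 : 𝒜))

/-- An object is trivial if `0 ⟶ X` is a weak equivalence. -/
def TrivialObj (W : MorphismProperty 𝒜) (A : 𝒜) : Prop := W (0 : (0 : 𝒜) ⟶ A)

/-- `P` is projective in the exact category. -/
def IsProjObj (E : ExactStructure 𝒜) (P : 𝒜) : Prop :=
  ∀ {A B : 𝒜} (d : A ⟶ B), IsDeflation E d → ∀ g : P ⟶ B, ∃ h : P ⟶ A, h ≫ d = g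

/-- The exact category has enough projective objects. -/
def HasEnoughProj (E : ExactStructure 𝒜) : Prop :=
  ∀ X : 𝒜, ∃ (P : 𝒜) (d : P ⟶ X), IsProjObj E P ∧ IsDeflation E d

/-- Cofibrations are exactly the inflations with cofibrant cokernel. -/
def CofibsAreInflWithCofibCoker (E : ExactStructure 𝒜) (C : MorphismProperty 𝒜) : Prop :=
  ∀ {A B : 𝒜} (f : A ⟶ B),
    C f ↔ ∃ (Z : 𝒜) (d : B ⟶ Z), E.conflation f d ∧ Cofibrant C Z

/-- Fibrations are exactly the deflations with fibrant kernel. -/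
def FibsAreDeflWithFibKer (E : ExactStructure 𝒜) (F : MorphismProperty 𝒜) : Prop :=
  ∀ {A B : 𝒜} (f : A ⟶ B),
    F f ↔ ∃ (K : 𝒜) (k : K ⟶ A), E.conflation k f ∧ Fibrant F K

/-- Trivial fibrations are exactly the deflations with trivially fibrant kernel. -/
def TrivFibsAreDeflWithTrivFibKer (E : ExactStructure 𝒜)
    (F W : MorphismProperty 𝒜) : Prop :=
  ∀ {A B : 𝒜} (f : A ⟶ B),
    (F f ∧ W f) ↔ ∃ (K : 𝒜) (k : K ⟶ A), E.conflation k f ∧ Fibrant F K ∧ TrivialObj W K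

/-- Every cofibration is an inflation. -/
def CofibsAreInfl (E : ExactStructure 𝒜) (C : MorphismProperty 𝒜) : Prop :=
  ∀ {A B : 𝒜} (f : A ⟶ B), C f → IsInflation E f

/-- Every trivial fibration is a deflation. -/
def TrivFibsAreDefl (E : ExactStructure 𝒜) (F W : MorphismProperty 𝒜) : Prop :=
  ∀ {A B : 𝒜} (f : A ⟶ B), F f → W f → IsDeflation E f

/-- An exact model structure in the sense of Gillespie. -/
def IsExactModelStr (E : ExactStructure 𝒜) (C F W : MorphismProperty 𝒜) : Prop :=
  IsModelStructure C F W ∧ CofibsAreInflWithCofibCoker E C ∧ FibsAreDeflWithFibKer E F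

/-- A weakly projective model structure: every object is fibrant, cofibrations are
exactly the inflations with cofibrant cokernel, and trivial fibrations are exactly
the deflations with trivially fibrant kernel. -/
def IsWeaklyProjModelStr (E : ExactStructure 𝒜) (C F W : MorphismProperty 𝒜) : Prop :=
  IsModelStructure C F W ∧ (∀ A : 𝒜, Fibrant F A) ∧
    CofibsAreInflWithCofibCoker E C ∧ TrivFibsAreDeflWithTrivFibKer E F W

/-- A projective model structure: an exact model structure with every object fibrant. -/
def IsProjectiveModelStr (E : ExactStructure 𝒜) (C F W : MorphismProperty 𝒜) : Prop :=
  IsExactModelStr E C F W ∧ (∀ A : 𝒜, Fibrant F A)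

/-- A class of objects is thick: closed under direct summands and two-out-of-three
in conflations. -/
def IsThick (E : ExactStructure 𝒜) (S : Set 𝒜) : Prop :=
  (∀ {A B : 𝒜} (i : A ⟶ B) (r : B ⟶ A), i ≫ r = 𝟙 A → B ∈ S → A ∈ S) ∧
  (∀ {X Y Z : 𝒜} (i : X ⟶ Y) (d : Y ⟶ Z), E.conflation i d →
    ((X ∈ S → Y ∈ S → Z ∈ S) ∧ (X ∈ S → Z ∈ S → Y ∈ S) ∧ (Y ∈ S → Z ∈ S → X ∈ S)))


/-!
Let `ω = X ∩ Y`, and call two parallel morphisms stably equal when their difference factors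
through an object of `ω`. A morphism `f` lies in `Weq_ω` if and only if, for every `T ∈ X`,
composition with `f` is a bijection on morphisms out of `T` up to stable equality; two-out-of-three
for such bijections is formal.

Deflations with kernel in `Y` induce stable bijections because a morphism from `X` to `Y` is stably
zero, and `A ⟶ A ⊞ W` with `W ∈ ω` is a stable isomorphism. Conversely, if `f : A ⟶ B` induces
stable bijections and `d : P ⟶ B` is a deflation with `P ∈ X` and kernel in `Y`, then
`d = x ≫ f + a ≫ b` for some `b : W ⟶ B` with `W ∈ ω`. So `d` factors through `(f, b) : A ⊞ W ⟶ B`,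
which is therefore a deflation through which every morphism from `X` lifts. If `A ⊞ W ∈ X`, it
follows that every extension of an object of `X` by its kernel splits, so the kernel is in `Y`;
heredity reduces the general case to this one.
-/

namespace ExactStructure.conflation

variable {E : ExactStructure 𝒜} {K M Z : 𝒜} {i : K ⟶ M} {d : M ⟶ Z}

theorem mono (h : E.conflation i d) : Mono i :=
  mono_of_isLimit_fork (E.isKernel h).some

theorem epi (h : E.conflation i d) : Epi d :=
  epi_of_isColimit_cofork (E.isCokernel h).some

theorem exists_lift {T : 𝒜} (h : E.conflation i d) (g : T ⟶ M) (hg : g ≫ d = 0) :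
    ∃ l : T ⟶ K, l ≫ i = g :=
  let l := KernelFork.IsLimit.lift' (E.isKernel h).some g hg
  ⟨l.1, l.2⟩

theorem exists_desc {T : 𝒜} (h : E.conflation i d) (g : M ⟶ T) (hg : i ≫ g = 0) :
    ∃ l : Z ⟶ T, d ≫ l = g :=
  let l := CokernelCofork.IsColimit.desc' (E.isCokernel h).some g hg
  ⟨l.1, l.2⟩

theorem isPullback (h : E.conflation i d) : IsPullback i 0 d (0 : (0 : 𝒜) ⟶ Z) := by
  have := h.mono
  refine ⟨⟨by simp [E.comp_zero h]⟩, ⟨PullbackCone.IsLimit.mk _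
    (fun s => (h.exists_lift s.fst (by simp [s.condition])).choose)
    (fun s => (h.exists_lift s.fst (by simp [s.condition])).choose_spec)
    (fun s => Subsingleton.elim _ _) fun s m hm _ => ?_⟩⟩
  rw [← cancel_mono i, hm, (h.exists_lift s.fst (by simp [s.condition])).choose_spec]

theorem isPushout (h : E.conflation i d) : IsPushout i 0 d (0 : (0 : 𝒜) ⟶ Z) := by
  have := h.epi
  refine ⟨⟨by simp [E.comp_zero h]⟩, ⟨PushoutCocone.IsColimit.mk _
    (fun s => (h.exists_desc s.inl (by simp [s.condition])).choose)
    (fun s => (h.exists_desc s.inl (by simp [s.condition])).choose_spec)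
    (fun s => Subsingleton.elim _ _) fun s m hm _ => ?_⟩⟩
  rw [← cancel_epi d, hm, (h.exists_desc s.inl (by simp [s.condition])).choose_spec]

theorem exists_retraction_of_section (h : E.conflation i d) (s : Z ⟶ M) (hs : s ≫ d = 𝟙 Z) :
    ∃ r : M ⟶ K, i ≫ r = 𝟙 K := by
  have := h.mono
  obtain ⟨r, hr⟩ := h.exists_lift (𝟙 M - d ≫ s) (by simp [hs])
  exact ⟨r, by simp [← cancel_mono i, hr, reassoc_of% E.comp_zero h]⟩

theorem exists_section_of_retraction (h : E.conflation i d) (r : M ⟶ K) (hr : i ≫ r = 𝟙 K) :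
    ∃ s : Z ⟶ M, s ≫ d = 𝟙 Z := by
  have := h.epi
  obtain ⟨s, hs⟩ := h.exists_desc (𝟙 M - r ≫ i) (by simp [reassoc_of% hr])
  exact ⟨s, by simp [← cancel_epi d, reassoc_of% hs, E.comp_zero h]⟩

end ExactStructure.conflation

section ExactCategory

variable {E : ExactStructure 𝒜}

theorem IsDeflation.conflation_of_isPullback {K M Z : 𝒜} {i : K ⟶ M} {d : M ⟶ Z}
    (hd : IsDeflation E d) (hi : IsPullback i 0 d (0 : (0 : 𝒜) ⟶ Z)) : E.conflation i d := by
  obtain ⟨K', i', h⟩ := hd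
  exact E.conflation_iso (h.isPullback.isoIsPullback _ _ hi) (Iso.refl M) (Iso.refl Z) h
    (by simp) (by simp)

theorem IsInflation.conflation_of_isPushout {K M Z : 𝒜} {i : K ⟶ M} {d : M ⟶ Z}
    (hi : IsInflation E i) (hd : IsPushout i 0 d (0 : (0 : 𝒜) ⟶ Z)) : E.conflation i d := by
  obtain ⟨Z', d', h⟩ := hi
  exact E.conflation_iso (Iso.refl K) (Iso.refl M) (h.isPushout.isoIsPushout _ _ hd) h
    (by simp) (by simp)

theorem IsInflation.of_isPushout {K M K' M' : 𝒜} {i : K ⟶ M} {f : K ⟶ K'} {f' : M ⟶ M'}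
    {i' : K' ⟶ M'} (hi : IsInflation E i) (hp : IsPushout i f f' i') : IsInflation E i' := by
  obtain ⟨Z, d, h⟩ := hi
  obtain ⟨M'', f'', i'', Z', d', hp', h'⟩ := E.pushout_inflation h f
  let e : M'' ≅ M' := hp'.isoIsPushout _ _ hp
  exact ⟨Z', e.inv ≫ d', E.conflation_iso (Iso.refl K') e (Iso.refl Z') h'
    (by simp [e]) (by simp)⟩

namespace ExactStructure.conflation

theorem exists_isPullback {K M Z Z' : 𝒜} {i : K ⟶ M} {d : M ⟶ Z} (h : E.conflation i d)
    (f : Z' ⟶ Z) :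
    ∃ (P : 𝒜) (f' : P ⟶ M) (d' : P ⟶ Z') (i' : K ⟶ P),
      IsPullback f' d' d f ∧ E.conflation i' d' ∧ i' ≫ f' = i := by
  obtain ⟨P, f', d', K', k', hp, h'⟩ := E.pullback_deflation h f
  have hi : hp.lift i 0 (by simp [E.comp_zero h]) ≫ f' = i := hp.lift_fst ..
  refine ⟨P, f', d', _, hp, IsDeflation.conflation_of_isPullback ⟨K', k', h'⟩ ?_, hi⟩
  exact IsPullback.of_right (by simpa [hi] using h.isPullback) (by simp) hp

theorem of_isPushout {K M Z K' M' : 𝒜} {i : K ⟶ M} {d : M ⟶ Z} (h : E.conflation i d)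
    {f : K ⟶ K'} {f' : M ⟶ M'} {i' : K' ⟶ M'} {d' : M' ⟶ Z} (hp : IsPushout i f f' i')
    (hd : f' ≫ d' = d) (hd' : i' ≫ d' = 0) : E.conflation i' d' :=
  (IsInflation.of_isPushout ⟨Z, d, h⟩ hp).conflation_of_isPushout
    (IsPushout.of_top (by simpa [hd] using h.isPushout) (by simp [hd']) hp)

theorem exists_isPushout {K M Z K' : 𝒜} {i : K ⟶ M} {d : M ⟶ Z} (h : E.conflation i d)
    (f : K ⟶ K') :
    ∃ (P : 𝒜) (f' : M ⟶ P) (i' : K' ⟶ P) (d' : P ⟶ Z),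
      IsPushout i f f' i' ∧ E.conflation i' d' ∧ f' ≫ d' = d := by
  obtain ⟨P, f', i', -, -, hp, -⟩ := E.pushout_inflation h f
  have hw : i ≫ d = f ≫ (0 : K' ⟶ Z) := by simp [E.comp_zero h]
  exact ⟨P, f', i', hp.desc d 0 hw, hp, h.of_isPushout hp (hp.inl_desc ..) (hp.inr_desc ..),
    hp.inl_desc ..⟩

theorem isPushout_of_kernel_comp_eq {K M Z P Z' : 𝒜} {i : K ⟶ M} {d : M ⟶ Z}
    (h : E.conflation i d) {i' : K ⟶ P} {d' : P ⟶ Z'} (h' : E.conflation i' d')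
    {f' : P ⟶ M} {f : Z' ⟶ Z} (hi : i' ≫ f' = i) (hd : f' ≫ d = d' ≫ f) :
    IsPushout f' d' d f :=
  IsPushout.of_left (by simpa [hi] using h.isPushout) hd h'.isPushout

theorem exists_conflation_comp {K M Z L V : 𝒜} {i : K ⟶ M} {d : M ⟶ Z} {j : L ⟶ Z} {e : Z ⟶ V}
    (h : E.conflation i d) (h' : E.conflation j e) :
    ∃ (N : 𝒜) (n : N ⟶ M) (m : N ⟶ L) (k : K ⟶ N),
      E.conflation k m ∧ E.conflation n (d ≫ e) ∧ k ≫ n = i := by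
  obtain ⟨N, n, m, k, hp, hk, hkn⟩ := h.exists_isPullback j
  have hde : IsDeflation E (d ≫ e) := E.deflation_comp h h'
  exact ⟨N, n, m, k, hk,
    hde.conflation_of_isPullback (by simpa using hp.paste_vert h'.isPullback), hkn⟩

theorem of_isDeflation_comp {K M Z V N : 𝒜} {i : K ⟶ M} {d : M ⟶ Z} {f : Z ⟶ V} {n : N ⟶ Z}
    (h : E.conflation i d) (hdf : IsDeflation E (d ≫ f))
    (hn : IsPullback n 0 f (0 : (0 : 𝒜) ⟶ V)) : E.conflation n f := by
  obtain ⟨L, l, m, k, hp, hk, hkl⟩ := h.exists_isPullback n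
  have hl : E.conflation l (d ≫ f) :=
    hdf.conflation_of_isPullback (by simpa using hp.paste_vert hn)
  exact hl.of_isPushout (h.isPushout_of_kernel_comp_eq hk hkl hp.w) rfl (by simp [hn.w])

/-- This is exactness of `Hom(T, M) ⟶ Hom(T, Z) ⟶ Ext¹(T, K) ⟶ Ext¹(T, M)`: if the first map is
surjective then the last one is injective. -/
theorem exists_retraction_of_extension {K M Z N T : 𝒜} {i : K ⟶ M} {d : M ⟶ Z} {j : K ⟶ N}
    {p : N ⟶ T} (h : E.conflation i d) (h' : E.conflation j p)
    (hT : ∀ g : T ⟶ Z, ∃ l : T ⟶ M, l ≫ d = g) (s : N ⟶ M) (hs : j ≫ s = i) :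
    ∃ r : N ⟶ K, j ≫ r = 𝟙 K := by
  have := h.mono
  obtain ⟨g, hg⟩ := h'.exists_desc (s ≫ d) (by rw [reassoc_of% hs, E.comp_zero h])
  obtain ⟨l, rfl⟩ := hT g
  obtain ⟨r, hr⟩ := h.exists_lift (s - p ≫ l) (by simp [hg])
  exact ⟨r, by simp [← cancel_mono i, hr, hs, reassoc_of% E.comp_zero h']⟩

end ExactStructure.conflation

theorem IsDeflation.of_comp (hwic : IsWIC E) {A B C : 𝒜} (g : A ⟶ B) (f : B ⟶ C)
    (h : IsDeflation E (g ≫ f)) : IsDeflation E f := by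
  obtain ⟨K, k, hk⟩ := h
  obtain ⟨P, p, q, k', hp, hq, -⟩ := hk.exists_isPullback f
  obtain ⟨N, n, hn⟩ := hwic p (hp.lift (𝟙 A) g (by simp)) (hp.lift_fst ..)
  have hqf : IsDeflation E (q ≫ f) := hp.w ▸ E.deflation_comp hn hk
  exact ⟨N, n ≫ q, hq.of_isDeflation_comp hqf (by simpa using hn.isPullback.paste_horiz hp.flip)⟩

end ExactCategory

namespace Ext1IsZero

variable {E : ExactStructure 𝒜}

theorem exists_lift {T K M Z : 𝒜} {i : K ⟶ M} {d : M ⟶ Z} (hTK : Ext1IsZero E T K)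
    (h : E.conflation i d) (g : T ⟶ Z) : ∃ l : T ⟶ M, l ≫ d = g := by
  obtain ⟨P, g', d', i', hp, h', -⟩ := h.exists_isPullback g
  obtain ⟨r, hr⟩ := hTK i' d' h'
  obtain ⟨s, hs⟩ := h'.exists_section_of_retraction r hr
  exact ⟨s ≫ g', by rw [Category.assoc, hp.w, reassoc_of% hs]⟩

theorem exists_extension {Z L K M : 𝒜} {i : K ⟶ M} {d : M ⟶ Z} (hZL : Ext1IsZero E Z L)
    (h : E.conflation i d) (g : K ⟶ L) : ∃ l : M ⟶ L, i ≫ l = g := by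
  obtain ⟨P, g', i', d', hp, h', -⟩ := h.exists_isPushout g
  obtain ⟨r, hr⟩ := hZL i' d' h'
  exact ⟨g' ≫ r, by rw [reassoc_of% hp.w, hr, Category.comp_id]⟩

theorem of_exists_section {T K : 𝒜}
    (H : ∀ {M : 𝒜} (i : K ⟶ M) (d : M ⟶ T), E.conflation i d → ∃ s : T ⟶ M, s ≫ d = 𝟙 T) :
    Ext1IsZero E T K := fun i d h =>
  let ⟨s, hs⟩ := H i d h
  h.exists_retraction_of_section s hs

theorem of_retract_left {S T K : 𝒜} (hTK : Ext1IsZero E T K) (s : S ⟶ T) (r : T ⟶ S)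
    (hsr : s ≫ r = 𝟙 S) : Ext1IsZero E S K :=
  of_exists_section fun _ _ h =>
    let ⟨l, hl⟩ := hTK.exists_lift h r
    ⟨s ≫ l, by rw [Category.assoc, hl, hsr]⟩

theorem of_retract_right {T K L : 𝒜} (hTL : Ext1IsZero E T L) (s : K ⟶ L) (r : L ⟶ K)
    (hsr : s ≫ r = 𝟙 K) : Ext1IsZero E T K := fun _ _ h =>
  let ⟨l, hl⟩ := hTL.exists_extension h s
  ⟨l ≫ r, by rw [reassoc_of% hl, hsr]⟩

theorem biprod_left {S T K : 𝒜} (hS : Ext1IsZero E S K) (hT : Ext1IsZero E T K) :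
    Ext1IsZero E (S ⊞ T) K :=
  of_exists_section fun _ _ h =>
    let ⟨l, hl⟩ := hS.exists_lift h biprod.inl
    let ⟨m, hm⟩ := hT.exists_lift h biprod.inr
    ⟨biprod.desc l m, by ext <;> simp [hl, hm]⟩

theorem biprod_right {T K L : 𝒜} (hK : Ext1IsZero E T K) (hL : Ext1IsZero E T L) :
    Ext1IsZero E T (K ⊞ L) := fun _ _ h =>
  let ⟨l, hl⟩ := hK.exists_extension h biprod.fst
  let ⟨m, hm⟩ := hL.exists_extension h biprod.snd
  ⟨biprod.lift l m, by ext <;> simp [hl, hm]⟩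

theorem zero_left (K : 𝒜) : Ext1IsZero E (0 : 𝒜) K :=
  of_exists_section fun _ _ _ => ⟨0, Subsingleton.elim _ _⟩

theorem zero_right (T : 𝒜) : Ext1IsZero E T (0 : 𝒜) :=
  fun _ _ _ => ⟨0, Subsingleton.elim _ _⟩

theorem of_conflation {A B C K : 𝒜} {i : A ⟶ B} {d : B ⟶ C} (h : E.conflation i d)
    (hA : Ext1IsZero E A K) (hC : Ext1IsZero E C K) : Ext1IsZero E B K := by
  intro M j p hjp
  obtain ⟨N, n, m, k, hkm, hn, hkn⟩ := hjp.exists_conflation_comp h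
  obtain ⟨r, hr⟩ := hA k m hkm
  obtain ⟨l, hl⟩ := hC.exists_extension hn r
  exact ⟨l, by rw [← hkn, Category.assoc, hl, hr]⟩

end Ext1IsZero

section AdditivelyClosed

theorem AdditivelyClosed.of_retract {S : Set 𝒜} (hzero : (0 : 𝒜) ∈ S)
    (hbiprod : ∀ A B : 𝒜, A ∈ S → B ∈ S → (A ⊞ B) ∈ S)
    (hretract : ∀ {A B : 𝒜} (i : A ⟶ B) (r : B ⟶ A), i ≫ r = 𝟙 A → B ∈ S → A ∈ S) :
    AdditivelyClosed S :=
  ⟨hzero, hbiprod, fun e => hretract e.inv e.hom e.inv_hom_id, hretract⟩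

theorem AdditivelyClosed.inter {S T : Set 𝒜} (hS : AdditivelyClosed S) (hT : AdditivelyClosed T) :
    AdditivelyClosed (S ∩ T) :=
  .of_retract ⟨hS.1, hT.1⟩ (fun A B hA hB => ⟨hS.2.1 A B hA.1 hB.1, hT.2.1 A B hA.2 hB.2⟩)
    fun i r h hB => ⟨hS.2.2.2 i r h hB.1, hT.2.2.2 i r h hB.2⟩

variable {E : ExactStructure 𝒜} {X Y : Set 𝒜}

theorem IsCotorsionPair.additivelyClosed_left (hcp : IsCotorsionPair E X Y) :
    AdditivelyClosed X := by
  refine .of_retract ((hcp.1 _).2 fun K _ => Ext1IsZero.zero_left K)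
    (fun A B hA hB => (hcp.1 _).2 fun K hK => ?_)
    (fun i r h hB => (hcp.1 _).2 fun K hK => ?_)
  · exact Ext1IsZero.biprod_left ((hcp.1 A).1 hA K hK) ((hcp.1 B).1 hB K hK)
  · exact Ext1IsZero.of_retract_left ((hcp.1 _).1 hB K hK) i r h

theorem IsCotorsionPair.additivelyClosed_right (hcp : IsCotorsionPair E X Y) :
    AdditivelyClosed Y := by
  refine .of_retract ((hcp.2 _).2 fun T _ => Ext1IsZero.zero_right T)
    (fun A B hA hB => (hcp.2 _).2 fun T hT => ?_)
    (fun i r h hB => (hcp.2 _).2 fun T hT => ?_)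
  · exact Ext1IsZero.biprod_right ((hcp.2 A).1 hA T hT) ((hcp.2 B).1 hB T hT)
  · exact Ext1IsZero.of_retract_right ((hcp.2 _).1 hB T hT) i r h

end AdditivelyClosed

section Category

variable {𝒞 : Type*} [Category 𝒞] {A B C : 𝒞}

theorem FibO.comp {S : Set 𝒞} {f : A ⟶ B} {g : B ⟶ C} (hf : FibO S f)
    (hg : FibO S g) : FibO S (f ≫ g) := fun T hT x =>
  let ⟨y, hy⟩ := hg T hT x
  let ⟨z, hz⟩ := hf T hT y
  ⟨z, by rw [reassoc_of% hz, hy]⟩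

theorem FibO.of_comp {S : Set 𝒞} {f : A ⟶ B} {g : B ⟶ C} (h : FibO S (f ≫ g)) :
    FibO S g := fun T hT x =>
  let ⟨y, hy⟩ := h T hT x
  ⟨y ≫ f, by rw [Category.assoc, hy]⟩

/-- `g` factors through an object of the class `ω`; for `ω` additively closed these morphisms are
the ideal by which one divides to form the stable category `𝒞/ω`. -/
def FactorsThroughClass (ω : Set 𝒞) (g : A ⟶ B) : Prop :=
  ∃ W ∈ ω, ∃ (a : A ⟶ W) (b : W ⟶ B), a ≫ b = g

namespace FactorsThroughClass

variable {ω : Set 𝒞}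

theorem precomp {g : B ⟶ C} (hg : FactorsThroughClass ω g) (f : A ⟶ B) :
    FactorsThroughClass ω (f ≫ g) := by
  obtain ⟨W, hW, a, b, rfl⟩ := hg
  exact ⟨W, hW, f ≫ a, b, Category.assoc ..⟩

theorem postcomp {g : A ⟶ B} (hg : FactorsThroughClass ω g) (f : B ⟶ C) :
    FactorsThroughClass ω (g ≫ f) := by
  obtain ⟨W, hW, a, b, rfl⟩ := hg
  exact ⟨W, hW, a, b ≫ f, (Category.assoc ..).symm⟩

theorem neg [Preadditive 𝒞] {g : A ⟶ B} (hg : FactorsThroughClass ω g) :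
    FactorsThroughClass ω (-g) := by
  simpa using hg.precomp (-𝟙 A)

end FactorsThroughClass

end Category

theorem FactorsThroughClass.zero {ω : Set 𝒜} (hω : AdditivelyClosed ω) {A B : 𝒜} :
    FactorsThroughClass ω (0 : A ⟶ B) :=
  ⟨0, hω.1, 0, 0, zero_comp⟩

theorem FactorsThroughClass.add {ω : Set 𝒜} (hω : AdditivelyClosed ω) {A B : 𝒜} {g h : A ⟶ B}
    (hg : FactorsThroughClass ω g) (hh : FactorsThroughClass ω h) :
    FactorsThroughClass ω (g + h) := by
  obtain ⟨W, hW, a, b, rfl⟩ := hg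
  obtain ⟨W', hW', a', b', rfl⟩ := hh
  exact ⟨W ⊞ W', hω.2.1 W W' hW hW', biprod.lift a a', biprod.desc b b', by simp⟩

/-- Stable equality with respect to `ω`, whose quotient category is the stable category `𝒜/ω`. -/
def stableRel (ω : Set 𝒜) : HomRel 𝒜 :=
  fun _ _ f g => FactorsThroughClass ω (f - g)

theorem AdditivelyClosed.congruence_stableRel {ω : Set 𝒜} (hω : AdditivelyClosed ω) :
    Congruence (stableRel ω) where
  equivalence :=
    { refl f := by simpa [stableRel] using FactorsThroughClass.zero hω
      symm h := by simpa [stableRel] using h.neg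
      trans h h' := by simpa [stableRel] using FactorsThroughClass.add hω h h' }
  comp_left f _ _ h := by simpa [stableRel] using h.precomp f
  comp_right g h := by simpa [stableRel] using h.postcomp g

/-- The `X`-colocal morphisms of the stable category `𝒜/ω`, as a class of morphisms of `𝒜`: those
`f : A ⟶ B` for which `Hom(T, A)/ω ⟶ Hom(T, B)/ω` is bijective for every `T ∈ X`. -/
def stableColocal (ω X : Set 𝒜) : MorphismProperty 𝒜 :=
  (ObjectProperty.isColocal fun T : Quotient (stableRel ω) => T.as ∈ X).inverseImage
    (Quotient.functor (stableRel ω))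

instance (ω X : Set 𝒜) : (stableColocal ω X).HasTwoOutOfThreeProperty :=
  inferInstanceAs (MorphismProperty.inverseImage _ _).HasTwoOutOfThreeProperty

theorem stableColocal_iff {ω X : Set 𝒜} (hω : AdditivelyClosed ω) {A B : 𝒜} (f : A ⟶ B) :
    stableColocal ω X f ↔ ∀ T ∈ X,
      (∀ g : T ⟶ A, FactorsThroughClass ω (g ≫ f) → FactorsThroughClass ω g) ∧
      ∀ g : T ⟶ B, ∃ h : T ⟶ A, FactorsThroughClass ω (g - h ≫ f) := by
  have := hω.congruence_stableRel
  let F := Quotient.functor (stableRel ω)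
  have map_eq {A B : 𝒜} (g h : A ⟶ B) : F.map g = F.map h ↔ FactorsThroughClass ω (g - h) :=
    Quotient.functor_map_eq_iff (stableRel ω) g h
  have map_eq_zero {A B : 𝒜} (g : A ⟶ B) : F.map g = F.map 0 ↔ FactorsThroughClass ω g := by
    rw [map_eq, sub_zero]
  refine ⟨fun hf T hT => ?_, fun H ⟨T⟩ hT => ?_⟩
  · obtain ⟨inj, surj⟩ : Function.Bijective fun g : F.obj T ⟶ F.obj A => g ≫ F.map f :=
      hf (F.obj T) hT
    refine ⟨fun g hg => (map_eq_zero g).1 (inj ?_), fun g => ?_⟩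
    · simpa only [← F.map_comp, zero_comp] using (map_eq_zero _).2 hg
    · obtain ⟨h, hh⟩ := surj (F.map g)
      obtain ⟨h, rfl⟩ := F.map_surjective h
      exact ⟨h, (map_eq _ _).1 (by simpa using hh.symm)⟩
  · obtain ⟨inj, surj⟩ := H T hT
    change Function.Bijective fun g : F.obj T ⟶ F.obj A => g ≫ F.map f
    refine ⟨fun g h hgh => ?_, fun g => ?_⟩
    · obtain ⟨g, rfl⟩ := F.map_surjective g
      obtain ⟨h, rfl⟩ := F.map_surjective h
      refine (map_eq g h).2 (inj (g - h) ?_)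
      rw [Preadditive.sub_comp, ← map_eq]
      simpa using hgh
    · obtain ⟨g, rfl⟩ := F.map_surjective g
      obtain ⟨h, hh⟩ := surj g
      exact ⟨F.map h, by simpa using ((map_eq _ _).2 hh).symm⟩

theorem stableColocal_biprod_inl {ω : Set 𝒜} (hω : AdditivelyClosed ω) (X : Set 𝒜) (A : 𝒜) {W : 𝒜}
    (hW : W ∈ ω) : stableColocal ω X (biprod.inl : A ⟶ A ⊞ W) := by
  refine (stableColocal_iff hω _).2 fun T _ => ⟨fun g hg => by simpa using hg.postcomp biprod.fst,
    fun g => ⟨g ≫ biprod.fst, W, hW, g ≫ biprod.snd, biprod.inr, ?_⟩⟩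
  ext <;> simp

namespace IsCotorsionPair

variable {E : ExactStructure 𝒜} {X Y : Set 𝒜}

theorem additivelyClosed_inter (hcp : IsCotorsionPair E X Y) : AdditivelyClosed (X ∩ Y) :=
  hcp.additivelyClosed_left.inter hcp.additivelyClosed_right

theorem ext1IsZero (hcp : IsCotorsionPair E X Y) {T K : 𝒜} (hT : T ∈ X) (hK : K ∈ Y) :
    Ext1IsZero E T K :=
  (hcp.1 T).1 hT K hK

theorem left_mem_of_conflation (hcp : IsCotorsionPair E X Y) {A B C : 𝒜} {i : A ⟶ B} {d : B ⟶ C}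
    (h : E.conflation i d) (hA : A ∈ X) (hC : C ∈ X) : B ∈ X :=
  (hcp.1 B).2 fun _ hK =>
    Ext1IsZero.of_conflation h (hcp.ext1IsZero hA hK) (hcp.ext1IsZero hC hK)

theorem fibO_of_tFibO (hcp : IsCotorsionPair E X Y) {A B : 𝒜} {q : A ⟶ B} (hq : TFibO E Y q) :
    FibO X q := fun _ hT g =>
  let ⟨_, _, hk, hK⟩ := hq
  Ext1IsZero.exists_lift (hcp.ext1IsZero hT hK) hk g

theorem factorsThroughClass_of_mem (hcp : IsCotorsionPair E X Y) (hcomp : IsCompleteCP E X Y)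
    {A B : 𝒜} (hA : A ∈ X) (hB : B ∈ Y) (g : A ⟶ B) : FactorsThroughClass (X ∩ Y) g := by
  obtain ⟨-, W, C, i, d, h, hC, hW⟩ := hcomp A
  obtain ⟨b, hb⟩ := Ext1IsZero.exists_extension (hcp.ext1IsZero hC hB) h g
  exact ⟨W, ⟨hcp.left_mem_of_conflation h hA hC, hW⟩, i, b, hb⟩

theorem stableColocal_of_tFibO (hcp : IsCotorsionPair E X Y) (hcomp : IsCompleteCP E X Y)
    {A B : 𝒜} {q : A ⟶ B} (hq : TFibO E Y q) : stableColocal (X ∩ Y) X q := by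
  have hω := hcp.additivelyClosed_inter
  have hlift : FibO X q := hcp.fibO_of_tFibO hq
  obtain ⟨K, k, hk, hK⟩ := hq
  refine (stableColocal_iff hω q).2 fun T hT => ⟨fun g hg => ?_, fun g => ?_⟩
  · obtain ⟨W, hW, a, b, hab⟩ := hg
    obtain ⟨c, hc⟩ := hlift W hW.1 b
    obtain ⟨l, hl⟩ := hk.exists_lift (g - a ≫ c) (by simp [hc, hab])
    have hker : FactorsThroughClass (X ∩ Y) (g - a ≫ c) :=
      hl ▸ (hcp.factorsThroughClass_of_mem hcomp hT hK l).postcomp k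
    simpa using hker.add hω ⟨W, hW, a, c, rfl⟩
  · obtain ⟨h, rfl⟩ := hlift T hT g
    exact ⟨h, by simpa using FactorsThroughClass.zero hω⟩

theorem kernel_mem_right (hcp : IsCotorsionPair E X Y) {K M B : 𝒜} {k : K ⟶ M} {q : M ⟶ B}
    (hkq : E.conflation k q) (hM : M ∈ X) (hq : FibO X q)
    (hend : ∀ g : M ⟶ M, g ≫ q = 0 → FactorsThroughClass Y g) : K ∈ Y := by
  refine (hcp.2 K).2 fun T hT N j p hjp => ?_
  obtain ⟨P, n, j', p', hp, hjp', -⟩ := hjp.exists_isPushout k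
  have hP : P ∈ X := hcp.left_mem_of_conflation hjp' hM hT
  have hw : j ≫ (0 : N ⟶ B) = k ≫ q := by simp [E.comp_zero hkq]
  -- `u` retracts the pushed out inflation up to a morphism through `Y`, which extends to `P`.
  obtain ⟨u, hu⟩ := hq P hP (hp.desc 0 q hw)
  have hju : j' ≫ u ≫ q = q := by rw [hu, hp.inr_desc]
  obtain ⟨W, hW, a, b, hab⟩ := hend (𝟙 M - j' ≫ u) (by simp [hju])
  obtain ⟨c, hc⟩ := Ext1IsZero.exists_extension (hcp.ext1IsZero hT hW) hjp' a
  have hretract : j' ≫ (u + c ≫ b) = 𝟙 M := by simp [reassoc_of% hc, hab]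
  exact hkq.exists_retraction_of_extension hjp (hq T hT) (n ≫ (u + c ≫ b))
    (by rw [reassoc_of% hp.w, hretract, Category.comp_id])

theorem tFibO_of_stableColocal (hcp : IsCotorsionPair E X Y) (hcomp : IsCompleteCP E X Y)
    (hher : IsHereditaryCP E X Y) {A B : 𝒜} {q : A ⟶ B} (hq : IsDeflation E q) (hlift : FibO X q)
    (hcolocal : stableColocal (X ∩ Y) X q) : TFibO E Y q := by
  have hω := hcp.additivelyClosed_inter
  obtain ⟨K, k, hk⟩ := hq
  obtain ⟨⟨L, P, l, e, hle, hP, hL⟩, -⟩ := hcomp A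
  obtain ⟨N, n, m, l', hl'm, hn, -⟩ := hle.exists_conflation_comp hk
  have he : TFibO E Y e := ⟨L, l, hle, hL⟩
  have heq : stableColocal (X ∩ Y) X (e ≫ q) :=
    MorphismProperty.comp_mem _ e q (hcp.stableColocal_of_tFibO hcomp he) hcolocal
  have hN : N ∈ Y := by
    refine hcp.kernel_mem_right hn hP ((hcp.fibO_of_tFibO he).comp hlift) fun g hg => ?_
    obtain ⟨W, hW, a, b, hab⟩ :=
      ((stableColocal_iff hω _).1 heq P hP).1 g (hg ▸ FactorsThroughClass.zero hω)
    exact ⟨W, hW.2, a, b, hab⟩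
  exact ⟨K, k, hk, hher.2 l' m hl'm hL hN⟩

theorem stableColocal_of_weqO (hcp : IsCotorsionPair E X Y) (hcomp : IsCompleteCP E X Y)
    {A B : 𝒜} {f : A ⟶ B} (hf : WeqO E (X ∩ Y) Y f) : stableColocal (X ∩ Y) X f := by
  obtain ⟨W, hW, t, K, k, hk, hK⟩ := hf
  rw [← biprod.inl_desc f t]
  exact MorphismProperty.comp_mem _ _ _
    (stableColocal_biprod_inl hcp.additivelyClosed_inter X A hW)
    (hcp.stableColocal_of_tFibO hcomp ⟨K, k, hk, hK⟩)

theorem weqO_of_stableColocal (hwic : IsWIC E) (hcp : IsCotorsionPair E X Y)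
    (hcomp : IsCompleteCP E X Y) (hher : IsHereditaryCP E X Y) {A B : 𝒜} {f : A ⟶ B}
    (hf : stableColocal (X ∩ Y) X f) : WeqO E (X ∩ Y) Y f := by
  have hω := hcp.additivelyClosed_inter
  obtain ⟨⟨L, P, l, d, hld, hP, hL⟩, -⟩ := hcomp B
  obtain ⟨x, W, hW, a, b, hab⟩ := ((stableColocal_iff hω f).1 hf P hP).2 d
  have hd : biprod.lift x a ≫ biprod.desc f b = d := by simp [hab]
  have hdefl : IsDeflation E (biprod.desc f b) :=
    .of_comp hwic (biprod.lift x a) _ (hd ▸ ⟨L, l, hld⟩)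
  have hlift : FibO X (biprod.desc f b) :=
    .of_comp (f := biprod.lift x a) (hd ▸ hcp.fibO_of_tFibO ⟨L, l, hld, hL⟩)
  have hcolocal : stableColocal (X ∩ Y) X (biprod.desc f b) :=
    MorphismProperty.of_precomp _ biprod.inl _ (stableColocal_biprod_inl hω X A hW)
      (by rwa [biprod.inl_desc])
  exact ⟨W, hW, b, hcp.tFibO_of_stableColocal hcomp hher hdefl hlift hcolocal⟩

theorem weqO_eq_stableColocal (hwic : IsWIC E) (hcp : IsCotorsionPair E X Y)
    (hcomp : IsCompleteCP E X Y) (hher : IsHereditaryCP E X Y) :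
    WeqO E (X ∩ Y) Y = stableColocal (X ∩ Y) X :=
  MorphismProperty.ext _ _ fun _ _ _ =>
    ⟨hcp.stableColocal_of_weqO hcomp, hcp.weqO_of_stableColocal hwic hcomp hher⟩

end IsCotorsionPair

theorem stmt_10_general (E : ExactStructure 𝒜) (hwic : IsWIC E) (X Y : Set 𝒜)
    (hcp : IsCotorsionPair E X Y) (hcomp : IsCompleteCP E X Y) (hher : IsHereditaryCP E X Y)
    {A B C : 𝒜} (α : A ⟶ B) (β : B ⟶ C) :
    (WeqO E (X ∩ Y) Y α → WeqO E (X ∩ Y) Y β → WeqO E (X ∩ Y) Y (α ≫ β)) ∧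
    (WeqO E (X ∩ Y) Y α → WeqO E (X ∩ Y) Y (α ≫ β) → WeqO E (X ∩ Y) Y β) ∧
    (WeqO E (X ∩ Y) Y β → WeqO E (X ∩ Y) Y (α ≫ β) → WeqO E (X ∩ Y) Y α) := by
  rw [hcp.weqO_eq_stableColocal hwic hcomp hher]
  exact ⟨MorphismProperty.comp_mem _ α β, MorphismProperty.of_precomp _ α β,
    MorphismProperty.of_postcomp _ α β⟩

/-- Two-out-of-three for `Weq_ω`. -/
theorem stmt_10 (E : ExactStructure 𝒜) (hwic : IsWIC E) (X Y : Set 𝒜)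
    (hcp : IsCotorsionPair E X Y) (hcomp : IsCompleteCP E X Y)
    (hher : IsHereditaryCP E X Y) (hcf : IsContravariantlyFinite (X ∩ Y))
    {A B C : 𝒜} (α : A ⟶ B) (β : B ⟶ C) :
    (WeqO E (X ∩ Y) Y α → WeqO E (X ∩ Y) Y β → WeqO E (X ∩ Y) Y (α ≫ β)) ∧
    (WeqO E (X ∩ Y) Y α → WeqO E (X ∩ Y) Y (α ≫ β) → WeqO E (X ∩ Y) Y β) ∧
    (WeqO E (X ∩ Y) Y β → WeqO E (X ∩ Y) Y (α ≫ β) → WeqO E (X ∩ Y) Y α) := by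
  exact stmt_10_general E hwic X Y hcp hcomp hher α β
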